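/- For every integer n ≥ 1 and every x ≥ 0, the first central moment satisfies B̃_n(t−x;x) = (ξ'(p_n(x))/ξ(p_n(x)) − 1)·x + (1/n)·[ S'(1)/S(1) + V'(1)·ξ'(p_n(x))/ξ(p_n(x)) ], where B̃_n(t−x;x) denotes the operator applied to the function t ↦ t−x. -/

import Mathlib

open Real MeasureTheory Filter Topology

/-- `p_n(x) = n² x² T(1) + n x U(1) + V(1)`. -/
noncomputable def pnx (T U V : ℝ → ℝ) (n : ℕ) (x : ℝ) : ℝ :=
  (n : ℝ) ^ 2 * x ^ 2 * T 1 + (n : ℝ) * x * U 1 + V 1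

/-- The Euler Beta function value `B(j, n+1) = Γ(j)Γ(n+1)/Γ(j+n+1)`. -/
noncomputable def betaB (j n : ℕ) : ℝ :=
  Real.Gamma (j : ℝ) * Real.Gamma ((n : ℝ) + 1) / Real.Gamma ((j : ℝ) + (n : ℝ) + 1)

/-- The Baskakov–Durrmeyer type operator `B̃_n(f;x)`. -/
noncomputable def BDop (ξ S T U V : ℝ → ℝ) (Θ : ℕ → ℝ → ℝ) (n : ℕ) (f : ℝ → ℝ) (x : ℝ) : ℝ :=
  (S 1 * ξ (pnx T U V n x))⁻¹ *
    (Θ 0 ((n : ℝ) * x) * f 0 +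
      ∑' j : ℕ, (Θ (j + 1) ((n : ℝ) * x) / betaB (j + 1) n) *
        ∫ s in Set.Ioi (0 : ℝ), s ^ j * (1 + s) ^ (-((n : ℝ) + (j : ℝ) + 2)) * f s)

theorem ps_deriv (k : ℕ) (ρ : ℝ) (a : ℕ → ℝ) (F : ℝ → ℝ)
    (h : ∀ s ∈ Set.Ioo (-ρ) ρ, HasSum (fun j : ℕ => a j * s ^ (j + k)) (F s))
    (s : ℝ) (hs : s ∈ Set.Ioo (-ρ) ρ) :
    HasSum (fun j : ℕ => a j * (((j + k : ℕ) : ℝ) * s ^ (j + k - 1))) (deriv F s) ∧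
      HasDerivAt F (deriv F s) s := by
  have hs' : |s| < ρ := abs_lt.2 hs
  obtain ⟨t, hst, htρ⟩ := exists_between hs'
  obtain ⟨R, htR, hRρ⟩ := exists_between htρ
  have ht : 0 < t := (abs_nonneg s).trans_lt hst
  have hR : 0 < R := ht.trans htR
  have hRs := (h R ⟨by linarith, hRρ⟩).summable
  obtain ⟨C, hC⟩ := (Metric.isBounded_range_of_tendsto _ hRs.tendsto_atTop_zero).exists_norm_le
  have hC' : ∀ j, |a j| * R ^ (j + k) ≤ C := by
    intro j
    have := hC _ ⟨j, rfl⟩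
    simpa [abs_mul, abs_of_pos hR] using this
  have hsub : ∀ y ∈ Set.Ioo (-t) t, y ∈ Set.Ioo (-ρ) ρ := by
    rintro y ⟨h1, h2⟩
    exact ⟨by linarith, by linarith⟩
  have hq : t / R < 1 := by rw [div_lt_one hR]; exact htR
  have hq0 : 0 < t / R := div_pos ht hR
  have hsum : Summable (fun j : ℕ => C / t * (((j + k : ℕ) : ℝ) ^ 1 * (t / R) ^ (j + k))) := by
    apply Summable.mul_left
    have := summable_pow_mul_geometric_of_norm_lt_one (R := ℝ) 1 (r := t / R)
      (by rw [Real.norm_eq_abs, abs_of_pos hq0]; exact hq)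
    exact (summable_nat_add_iff k).2 this
  have hbound : ∀ (j : ℕ) (y : ℝ), y ∈ Set.Ioo (-t) t →
      ‖a j * (((j + k : ℕ) : ℝ) * y ^ (j + k - 1))‖ ≤
        C / t * (((j + k : ℕ) : ℝ) ^ 1 * (t / R) ^ (j + k)) := by
    intro j y hy
    have hy' : |y| ≤ t := (abs_lt.2 hy).le
    have hc := hC' j
    rw [norm_mul, norm_mul, norm_pow, Real.norm_eq_abs, Real.norm_eq_abs, Real.norm_eq_abs, Nat.abs_cast]
    generalize j + k = m at *
    rcases m with _ | m
    · simp
    have h1 : |y| ^ m ≤ t ^ m := pow_le_pow_left₀ (abs_nonneg y) hy' m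
    have h2 : |a j| ≤ C / R ^ (m + 1) := by rw [le_div_iff₀ (by positivity)]; exact hc
    have : C / t * (((m + 1 : ℕ) : ℝ) ^ 1 * (t / R) ^ (m + 1)) =
        C / R ^ (m + 1) * (((m + 1 : ℕ) : ℝ) * t ^ m) := by
      rw [div_pow, pow_succ t m]; field_simp
    rw [this, Nat.add_sub_cancel]
    have h3 : 0 ≤ C / R ^ (m + 1) := (abs_nonneg _).trans h2
    gcongr
  have hmem : s ∈ Set.Ioo (-t) t := abs_lt.1 hst
  have hd := hasDerivAt_tsum_of_isPreconnected (𝕜 := ℝ) (F := ℝ)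
    (g := fun j y => a j * y ^ (j + k))
    (g' := fun j y => a j * (((j + k : ℕ) : ℝ) * y ^ (j + k - 1))) hsum isOpen_Ioo
    isPreconnected_Ioo (fun j y _ => (hasDerivAt_pow (j + k) y).const_mul (a j)) hbound hmem
    (h s hs).summable hmem
  have hF : HasDerivAt F (∑' j, a j * (((j + k : ℕ) : ℝ) * s ^ (j + k - 1))) s := by
    refine hd.congr_of_eventuallyEq ?_
    filter_upwards [isOpen_Ioo.mem_nhds hmem] with y hy
    exact (h y (hsub y hy)).tsum_eq.symm
  rw [hF.deriv]
  exact ⟨(Summable.of_norm_bounded hsum fun j => hbound j s hmem).hasSum, hF⟩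

theorem kernel_tendsto (j m : ℕ) (h : j < m) :
    Tendsto (fun s : ℝ => s ^ j / (1 + s) ^ m) atTop (𝓝 0) := by
  have h1 : Tendsto (fun s : ℝ => (1 + s)⁻¹) atTop (𝓝 0) :=
    tendsto_inv_atTop_zero.comp (tendsto_atTop_add_const_left _ _ tendsto_id)
  refine squeeze_zero' ?_ ?_ h1
  · filter_upwards [eventually_ge_atTop 0] with s hs
    positivity
  · filter_upwards [eventually_ge_atTop 0] with s hs
    rw [div_le_iff₀ (by positivity), inv_mul_eq_div, le_div_iff₀ (by positivity)]
    calc s ^ j * (1 + s) ≤ (1 + s) ^ j * (1 + s) := by gcongr; linarith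
      _ = (1 + s) ^ (j + 1) := by ring
      _ ≤ (1 + s) ^ m := pow_le_pow_right₀ (by linarith) h

theorem kernel_deriv0 (m : ℕ) (s : ℝ) (hs : 0 ≤ s) :
    HasDerivAt (fun s : ℝ => -(1 / ((m : ℝ) + 1)) * (s ^ 0 / (1 + s) ^ (m + 1)))
      (s ^ 0 / (1 + s) ^ (0 + m + 2)) s := by
  have h0 : (1 + s) ≠ 0 := by positivity
  have h1 : HasDerivAt (fun s : ℝ => (1 + s) ^ (m + 1)) (((m + 1 : ℕ) : ℝ) * (1 + s) ^ m * 1) s := by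
    exact ((hasDerivAt_id s).const_add 1).pow (m + 1)
  have h2 := ((hasDerivAt_pow 0 s).div h1 (pow_ne_zero _ h0)).const_mul (-(1 / ((m : ℝ) + 1)))
  refine h2.congr_deriv ?_
  have : (m : ℝ) + 1 ≠ 0 := by positivity
  push_cast
  field_simp
  ring

theorem kernel_deriv (j m : ℕ) (s : ℝ) (hs : 0 ≤ s) :
    HasDerivAt (fun s : ℝ => s ^ (j + 1) / (1 + s) ^ (j + m + 2))
      (((j : ℝ) + 1) * (s ^ j / (1 + s) ^ (j + m + 2)) -
        ((j : ℝ) + m + 2) * (s ^ (j + 1) / (1 + s) ^ (j + 1 + m + 2))) s := by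
  have h0 : (1 + s) ≠ 0 := by positivity
  have h1 : HasDerivAt (fun s : ℝ => (1 + s) ^ (j + m + 2))
      (((j + m + 2 : ℕ) : ℝ) * (1 + s) ^ (j + m + 1) * 1) s := by
    exact ((hasDerivAt_id s).const_add 1).pow (j + m + 2)
  have h2 := ((hasDerivAt_pow (j + 1) s).div h1 (pow_ne_zero _ h0))
  refine h2.congr_deriv ?_
  push_cast
  rw [show j + 1 + m + 2 = j + m + 3 by ring]
  field_simp
  ring

theorem kernel_integral (m j : ℕ) :
    IntegrableOn (fun s : ℝ => s ^ j / (1 + s) ^ (j + m + 2)) (Set.Ioi 0) ∧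
      ∫ s in Set.Ioi (0 : ℝ), s ^ j / (1 + s) ^ (j + m + 2) =
        (j.factorial : ℝ) * m.factorial / (j + m + 1).factorial := by
  have hlim := (kernel_tendsto 0 (m + 1) (by omega)).const_mul (-(1 / ((m : ℝ) + 1)))
  have hi0 : IntegrableOn (fun s : ℝ => s ^ 0 / (1 + s) ^ (0 + m + 2)) (Set.Ioi 0) :=
    integrableOn_Ioi_deriv_of_nonneg' (fun s hs => kernel_deriv0 m s hs)
      (fun s hs => by have : (0 : ℝ) < s := hs; positivity) hlim
  have hint : ∀ j : ℕ, IntegrableOn (fun s : ℝ => s ^ j / (1 + s) ^ (j + m + 2)) (Set.Ioi 0) := by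
    intro j
    refine Integrable.mono' hi0 (Measurable.aestronglyMeasurable (by measurability)) ?_
    refine (ae_restrict_iff' measurableSet_Ioi).2 (Eventually.of_forall fun s hs => ?_)
    have hs : (0 : ℝ) < s := hs
    rw [Real.norm_of_nonneg (by positivity), div_le_div_iff₀ (by positivity) (by positivity)]
    calc s ^ j * (1 + s) ^ (0 + m + 2) ≤ (1 + s) ^ j * (1 + s) ^ (0 + m + 2) := by
          gcongr; linarith
      _ = s ^ 0 * (1 + s) ^ (j + m + 2) := by ring
  refine ⟨hint j, ?_⟩
  induction j with
  | zero =>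
    rw [integral_Ioi_of_hasDerivAt_of_tendsto' (fun s hs => kernel_deriv0 m s hs) hi0 hlim]
    have : (m : ℝ) + 1 ≠ 0 := by positivity
    have := Nat.factorial_ne_zero m
    simp [Nat.factorial_succ]
    field_simp
  | succ j ih =>
    have e := integral_Ioi_of_hasDerivAt_of_tendsto' (fun s hs => kernel_deriv j m s hs)
      (((hint j).const_mul ((j : ℝ) + 1)).sub ((hint (j + 1)).const_mul ((j : ℝ) + m + 2)))
      (kernel_tendsto (j + 1) (j + m + 2) (by omega))
    rw [integral_sub ((hint j).const_mul _) ((hint (j + 1)).const_mul _), integral_const_mul,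
      integral_const_mul, ih] at e
    have h2 : (j : ℝ) + m + 2 ≠ 0 := by positivity
    have h3 : ((j + m + 1).factorial : ℝ) ≠ 0 := by exact_mod_cast Nat.factorial_ne_zero _
    rw [show j + 1 + m + 1 = (j + m + 1) + 1 by ring, Nat.factorial_succ, Nat.factorial_succ]
    push_cast
    rw [eq_div_iff (by positivity)]
    simp only [ne_eq, Nat.add_eq_zero_iff, one_ne_zero, and_false, not_false_eq_true, zero_pow,
      zero_div, sub_zero] at e
    have e2 := sub_eq_zero.1 e
    rw [mul_div_assoc', div_eq_iff h3] at e2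
    linarith

theorem betaB_eq (j n : ℕ) : betaB (j + 1) n =
    (j.factorial : ℝ) * n.factorial / (j + n + 1).factorial := by
  unfold betaB
  rw [Real.Gamma_nat_eq_factorial, Nat.cast_add_one, Real.Gamma_nat_eq_factorial,
    show (j : ℝ) + 1 + n + 1 = ((j + n + 1 : ℕ) : ℝ) + 1 by push_cast; ring,
    Real.Gamma_nat_eq_factorial]

theorem term_eq (j n : ℕ) (hn : 1 ≤ n) (x : ℝ) :
    (betaB (j + 1) n)⁻¹ * ∫ s in Set.Ioi (0 : ℝ),
      s ^ j * (1 + s) ^ (-((n : ℝ) + (j : ℝ) + 2)) * (s - x) = ((j : ℝ) + 1) / n - x := by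
  obtain ⟨m, rfl⟩ : ∃ m, n = m + 1 := ⟨n - 1, by omega⟩
  have h : ∫ s in Set.Ioi (0 : ℝ),
      s ^ j * (1 + s) ^ (-(((m + 1 : ℕ) : ℝ) + (j : ℝ) + 2)) * (s - x) =
      ∫ s in Set.Ioi (0 : ℝ), (s ^ (j + 1) / (1 + s) ^ (j + 1 + m + 2) -
        x * (s ^ j / (1 + s) ^ (j + (m + 1) + 2))) := by
    refine setIntegral_congr_fun measurableSet_Ioi fun s hs => ?_
    have hs : (0 : ℝ) < s := hs
    have : (1 + s) ^ (-(((m + 1 : ℕ) : ℝ) + (j : ℝ) + 2)) = ((1 + s) ^ (j + m + 3))⁻¹ := by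
      rw [Real.rpow_neg (by positivity), ← Real.rpow_natCast]
      congr 2
      push_cast
      ring
    simp only [this]
    rw [show j + 1 + m + 2 = j + m + 3 by ring, show j + (m + 1) + 2 = j + m + 3 by ring]
    ring
  obtain ⟨i1, e1⟩ := kernel_integral m (j + 1)
  obtain ⟨i2, e2⟩ := kernel_integral (m + 1) j
  rw [h, integral_sub i1 (i2.const_mul x), integral_const_mul, e1, e2, betaB_eq,
    show j + 1 + m + 1 = j + (m + 1) + 1 by ring]
  have h3 : ((j + (m + 1) + 1).factorial : ℝ) ≠ 0 := by exact_mod_cast Nat.factorial_ne_zero _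
  have h4 : (j.factorial : ℝ) ≠ 0 := by exact_mod_cast Nat.factorial_ne_zero _
  have h5 : (m.factorial : ℝ) ≠ 0 := by exact_mod_cast Nat.factorial_ne_zero _
  have h6 : (m : ℝ) + 1 ≠ 0 := by positivity
  rw [Nat.factorial_succ j, Nat.factorial_succ m]
  push_cast
  field_simp

theorem stmt7
    (ρ : ℝ) (hρ : 1 < ρ)
    (ξ S T U V : ℝ → ℝ) (Θ : ℕ → ℝ → ℝ)
    (p q r u v : ℕ → ℝ)
    (hξser : ∀ t : ℝ, HasSum (fun j : ℕ => p j * t ^ j) (ξ t))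
    (hξnn : ∀ t : ℝ, 0 ≤ ξ t)
    (hSser : ∀ s ∈ Set.Ioo (-ρ) ρ, HasSum (fun j : ℕ => q j * s ^ j) (S s))
    (hTser : ∀ s ∈ Set.Ioo (-ρ) ρ, HasSum (fun j : ℕ => r j * s ^ (j + 1)) (T s))
    (hUser : ∀ s ∈ Set.Ioo (-ρ) ρ, HasSum (fun j : ℕ => u j * s ^ (j + 2)) (U s))
    (hVser : ∀ s ∈ Set.Ioo (-ρ) ρ, HasSum (fun j : ℕ => v j * s ^ (j + 3)) (V s))
    (hS1 : 0 < S 1)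
    (hT'1 : deriv T 1 = 0) (hT''1 : deriv (deriv T) 1 = 0) (hU'1 : deriv U 1 = 1)
    (hΘnn : ∀ (j : ℕ) (y : ℝ), 0 ≤ y → 0 ≤ Θ j y)
    (hgen : ∀ y : ℝ, 0 ≤ y → ∀ s ∈ Set.Ioo (-ρ) ρ,
      HasSum (fun j : ℕ => Θ j y * s ^ j) (S s * ξ (y ^ 2 * T s + y * U s + V s)))
    (hξp : ∀ (m : ℕ), 1 ≤ m → ∀ y : ℝ, 0 ≤ y → 0 < ξ (pnx T U V m y))
    (n : ℕ) (hn : 1 ≤ n) (x : ℝ) (hx : 0 ≤ x) :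
    BDop ξ S T U V Θ n (fun t => t - x) x =
      (deriv ξ (pnx T U V n x) / ξ (pnx T U V n x) - 1) * x +
        (1 / (n : ℝ)) * (deriv S 1 / S 1 +
          deriv V 1 * (deriv ξ (pnx T U V n x) / ξ (pnx T U V n x))) := by
  have h1 : (1 : ℝ) ∈ Set.Ioo (-ρ) ρ := ⟨by linarith, hρ⟩
  have hn0 : (n : ℝ) ≠ 0 := by positivity
  have hy : 0 ≤ (n : ℝ) * x := by positivity
  have dS := (ps_deriv 0 ρ q S hSser 1 h1).2
  have dT := (ps_deriv 1 ρ r T hTser 1 h1).2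
  have dU := (ps_deriv 2 ρ u U hUser 1 h1).2
  have dV := (ps_deriv 3 ρ v V hVser 1 h1).2
  have dξ := (ps_deriv 0 (|pnx T U V n x| + 1) p ξ (fun s _ => hξser s) (pnx T U V n x)
    (abs_lt.1 (by linarith))).2
  have hξ0 := hξp n hn x hx
  have hP : pnx T U V n x = ((n : ℝ) * x) ^ 2 * T 1 + ((n : ℝ) * x) * U 1 + V 1 := by
    unfold pnx; ring
  have hG := hgen _ hy
  have g1 := (ps_deriv 0 ρ _ _ hG 1 h1).1
  have g0 := hG 1 h1
  rw [hT'1] at dT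
  rw [hU'1] at dU
  have dI := ((dT.const_mul (((n : ℝ) * x) ^ 2)).add (dU.const_mul ((n : ℝ) * x))).add dV
  have dG := dS.mul (HasDerivAt.comp (1 : ℝ) (hP ▸ dξ) dI)
  have eG := dG.deriv
  unfold BDop
  generalize hPP : pnx T U V n x = P at *
  subst hP
  have eG' : deriv (fun s => S s * ξ (((n : ℝ) * x) ^ 2 * T s + ((n : ℝ) * x) * U s + V s)) 1 = _ := eG
  rw [eG'] at g1
  simp only [one_pow, mul_one, add_zero] at g0 g1
  have hsum := (g1.div_const (n : ℝ)).sub (g0.mul_left x)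
  have hsum' := (hasSum_nat_add_iff' 1).2 hsum
  have hts : ∀ j : ℕ, (Θ (j + 1) ((n : ℝ) * x) / betaB (j + 1) n) *
        ∫ s in Set.Ioi (0 : ℝ), s ^ j * (1 + s) ^ (-((n : ℝ) + (j : ℝ) + 2)) * (s - x) =
      Θ (j + 1) ((n : ℝ) * x) * ((j + 1 : ℕ) : ℝ) / n - x * Θ (j + 1) ((n : ℝ) * x) := by
    intro j
    rw [div_eq_mul_inv, mul_assoc, term_eq j n hn x]
    push_cast
    ring
  simp only [hts]
  rw [hsum'.tsum_eq]
  simp only [Finset.sum_range_one]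
  have hS0 := hS1.ne'
  have hξ1 := hξ0.ne'
  simp only [Function.comp_apply, Pi.add_apply, Nat.cast_zero]
  generalize ((n : ℝ) * x) ^ 2 * T 1 + ((n : ℝ) * x) * U 1 + V 1 = Q at *
  generalize deriv ξ Q = D at *
  generalize ξ Q = W at *
  field_simp
  ring
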